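/- arXiv:1707.09846 — 7 statements merged into one kernel-verified Lean document; each statement's English description precedes it below -/
import Mathlib

section
/- Let b ≥ 2 and β ≥ 2 be integers and let m, n ≥ 0 be real numbers. For i ∈ ℤ define the carry digit r_i := 1 if frac(m/b^{i+1}) + frac(n/b^{i+1}) ≥ 1 and r_i := 0 otherwise, where frac denotes the fractional part. Then c_{b,β}(m) + c_{b,β}(n) = c_{b,β}(m + n) + (b − β)·Σ_{i∈ℤ} r_i·β^i (the sum converging since r_i = 0 for all large i). -/
/-- The `i`-th base-`b` digit (for `i : ℤ`) of a real number `x ≥ 0`: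
`⌊x·b^{−i}⌋ mod b`. -/
noncomputable def bDigit (b : ℕ) (x : ℝ) (i : ℤ) : ℤ :=
  ⌊x * (b : ℝ) ^ (-i)⌋ % b

/-- The `(b,β)`-content of a real number `x ≥ 0`: read the base-`b` digits of `x`
in base `β`. -/
noncomputable def content (b β : ℕ) (x : ℝ) : ℝ :=
  ∑' i : ℤ, (bDigit b x i : ℝ) * (β : ℝ) ^ i

/-- The `i`-th carry digit when `m + n` is computed in base `b`. -/
noncomputable def carry (b : ℕ) (m n : ℝ) (i : ℤ) : ℝ :=
  if 1 ≤ Int.fract (m / (b : ℝ) ^ (i + 1)) + Int.fract (n / (b : ℝ) ^ (i + 1)) then 1 else 0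

/-- A bounded sequence on `ℤ` vanishing at large indices can be read in base `β`. -/
theorem summable_mul_zpow_of_bounded {β : ℕ} (hβ : 2 ≤ β) {f : ℤ → ℝ} {C : ℝ} {N : ℕ}
    (hC : ∀ i, |f i| ≤ C) (hN : ∀ i : ℤ, (N : ℤ) ≤ i → f i = 0) :
    Summable fun i : ℤ => f i * (β : ℝ) ^ i := by
  have hβ' : (2 : ℝ) ≤ β := by exact_mod_cast hβ
  refine Summable.of_nat_of_neg ?_ ?_
  · refine summable_of_ne_finset_zero (s := Finset.range N) fun k hk => ?_
    rw [hN k (by simpa using hk), zero_mul]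
  · have hgeom : Summable fun k : ℕ => C * ((β : ℝ)⁻¹) ^ k :=
      (summable_geometric_of_lt_one (by positivity)
        (inv_lt_one_of_one_lt₀ (by linarith))).mul_left C
    refine hgeom.of_norm_bounded fun k => ?_
    rw [zpow_neg, zpow_natCast, ← inv_pow, norm_mul, Real.norm_eq_abs, Real.norm_eq_abs,
      abs_of_nonneg (a := (β : ℝ)⁻¹ ^ k) (by positivity)]
    exact mul_le_mul_of_nonneg_right (hC _) (by positivity)

theorem exists_nat_forall_floor_div_zpow_eq_zero {b : ℕ} (hb : 2 ≤ b) {x : ℝ} (hx : 0 ≤ x) :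
    ∃ N : ℕ, ∀ i : ℤ, (N : ℤ) ≤ i → ⌊x / (b : ℝ) ^ i⌋ = 0 := by
  have hb' : (2 : ℝ) ≤ b := by exact_mod_cast hb
  obtain ⟨N, hN⟩ := pow_unbounded_of_one_lt x (show (1 : ℝ) < b by linarith)
  refine ⟨N, fun i hi => Int.floor_eq_zero_iff.2 ⟨by positivity, ?_⟩⟩
  rw [div_lt_one (by positivity)]
  calc x < (b : ℝ) ^ (N : ℤ) := by simpa using hN
    _ ≤ (b : ℝ) ^ i := zpow_le_zpow_right₀ (by linarith) hi

theorem bDigit_eq_floor_div_emod (b : ℕ) (x : ℝ) (i : ℤ) :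
    bDigit b x i = ⌊x / (b : ℝ) ^ i⌋ % b := by
  rw [bDigit, zpow_neg, div_eq_mul_inv]

theorem bDigit_eq_floor_sub {b : ℕ} (hb : 2 ≤ b) (x : ℝ) (i : ℤ) :
    bDigit b x i = ⌊x / (b : ℝ) ^ i⌋ - b * ⌊x / (b : ℝ) ^ (i + 1)⌋ := by
  have hb' : (b : ℝ) ≠ 0 := by positivity
  rw [bDigit_eq_floor_div_emod, zpow_add_one₀ hb', ← div_div, Int.floor_div_natCast,
    Int.emod_def]

theorem carry_eq_floor_sub (b : ℕ) (m n : ℝ) (i : ℤ) :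
    carry b m n i = ⌊(m + n) / (b : ℝ) ^ (i + 1)⌋ - ⌊m / (b : ℝ) ^ (i + 1)⌋
      - ⌊n / (b : ℝ) ^ (i + 1)⌋ := by
  rw [carry, add_div]
  set u := m / (b : ℝ) ^ (i + 1)
  set v := n / (b : ℝ) ^ (i + 1)
  have hu := Int.floor_add_fract u
  have hv := Int.floor_add_fract v
  have hu0 := Int.fract_nonneg u
  have hv0 := Int.fract_nonneg v
  have hu1 := Int.fract_lt_one u
  have hv1 := Int.fract_lt_one v
  split_ifs with h
  · have : ⌊u + v⌋ = ⌊u⌋ + ⌊v⌋ + 1 := by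
      rw [Int.floor_eq_iff]; push_cast; constructor <;> linarith
    rw [this]; push_cast; ring
  · have : ⌊u + v⌋ = ⌊u⌋ + ⌊v⌋ := by
      rw [Int.floor_eq_iff]; push_cast; constructor <;> linarith
    rw [this]; push_cast; ring

/-- Schoolbook addition: the digits of `m + n` in terms of those of `m`, `n` and the carries. -/
theorem bDigit_add {b : ℕ} (hb : 2 ≤ b) (m n : ℝ) (i : ℤ) :
    (bDigit b (m + n) i : ℝ) =
      bDigit b m i + bDigit b n i + carry b m n (i - 1) - b * carry b m n i := by
  simp only [bDigit_eq_floor_sub hb, carry_eq_floor_sub, sub_add_cancel]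
  push_cast
  ring

theorem summable_bDigit_mul_zpow {b β : ℕ} (hb : 2 ≤ b) (hβ : 2 ≤ β) {x : ℝ} (hx : 0 ≤ x) :
    Summable fun i : ℤ => (bDigit b x i : ℝ) * (β : ℝ) ^ i := by
  obtain ⟨N, hN⟩ := exists_nat_forall_floor_div_zpow_eq_zero hb hx
  refine summable_mul_zpow_of_bounded hβ (C := b) (N := N) (fun i => ?_) fun i hi => ?_
  · have h0 : 0 ≤ bDigit b x i := Int.emod_nonneg _ (by omega)
    have h1 : bDigit b x i < b := Int.emod_lt_of_pos _ (by omega)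
    rw [abs_of_nonneg (by exact_mod_cast h0)]
    exact_mod_cast h1.le
  · rw [bDigit_eq_floor_div_emod, hN i hi]
    simp

theorem summable_carry_mul_zpow {b β : ℕ} (hb : 2 ≤ b) (hβ : 2 ≤ β) {m n : ℝ}
    (hm : 0 ≤ m) (hn : 0 ≤ n) :
    Summable fun i : ℤ => carry b m n i * (β : ℝ) ^ i := by
  obtain ⟨M, hM⟩ := exists_nat_forall_floor_div_zpow_eq_zero hb hm
  obtain ⟨N, hN⟩ := exists_nat_forall_floor_div_zpow_eq_zero hb hn
  obtain ⟨K, hK⟩ := exists_nat_forall_floor_div_zpow_eq_zero hb (add_nonneg hm hn)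
  refine summable_mul_zpow_of_bounded hβ (C := 1) (N := M + N + K) (fun i => ?_) fun i hi => ?_
  · rw [carry]
    split_ifs <;> simp
  · push_cast at hi
    rw [carry_eq_floor_sub, hM _ (by omega), hN _ (by omega), hK _ (by omega)]
    simp

/-- The carry-digit word accounts exactly for the failure of additivity of the content. -/
theorem stmt11 (b β : ℕ) (hb : 2 ≤ b) (hβ : 2 ≤ β)
    (m n : ℝ) (hm : 0 ≤ m) (hn : 0 ≤ n) :
    content b β m + content b β n =
      content b β (m + n) + ((b : ℝ) - (β : ℝ)) * ∑' i : ℤ, carry b m n i * (β : ℝ) ^ i := by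
  have hβ' : (β : ℝ) ≠ 0 := by positivity
  have hM := (summable_bDigit_mul_zpow hb hβ hm).hasSum
  have hN := (summable_bDigit_mul_zpow hb hβ hn).hasSum
  have hR := (summable_carry_mul_zpow hb hβ hm hn).hasSum
  have hshift : HasSum (fun i : ℤ => carry b m n (i - 1) * (β : ℝ) ^ i)
      (β * ∑' i : ℤ, carry b m n i * (β : ℝ) ^ i) := by
    rw [← (Equiv.addRight (1 : ℤ)).hasSum_iff]
    refine (hR.mul_left (β : ℝ)).congr_fun fun i => ?_
    simp only [Function.comp_apply, Equiv.coe_addRight, add_sub_cancel_right,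
      zpow_add_one₀ hβ']
    ring
  have hsum : content b β (m + n) = content b β m + content b β n +
      β * (∑' i : ℤ, carry b m n i * (β : ℝ) ^ i) -
      b * ∑' i : ℤ, carry b m n i * (β : ℝ) ^ i := by
    refine HasSum.tsum_eq ?_
    refine (((hM.add hN).add hshift).sub (hR.mul_left (b : ℝ))).congr_fun fun i => ?_
    rw [bDigit_add hb]
    ring
  rw [hsum]
  ring
end

section
/- Let b and d be integers with 1 < d ≤ b, and for i ≥ 1 set a_i := ⌊b^i/d⌋ − b·⌊b^{i−1}/d⌋ (so 0.a_1 a_2 a_3… is the base-b expansion of 1/d). Then for every k ≥ 1: a_i = (b−d)^{i−1} for all i = 1, …, k if and only if (b−d)^k < d. Moreover, if a_i = (b−d)^{i−1} for all i = 1, …, k−1, then a_k = (b−d)^{k−1} + ⌊(b−d)^k/d⌋. -/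
/-- If `c ^ n < d`, the digit of `1 / d` in base `c + d` at position `n + 1` is
`c ^ n + ⌊c ^ (n + 1) / d⌋`. -/
theorem digit_eq_of_pow_lt {c d n : ℕ} (h : c ^ n < d) :
    (c + d) ^ (n + 1) / d - (c + d) * ((c + d) ^ n / d) = c ^ n + c ^ (n + 1) / d := by
  have hd : 0 < d := Nat.zero_lt_of_lt h
  have hmod : (c + d) ^ n % d = c ^ n := by
    rw [Nat.pow_mod, Nat.add_mod_right, ← Nat.pow_mod, Nat.mod_eq_of_lt h]
  have hdiv := Nat.div_add_mod ((c + d) ^ n) d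
  rw [hmod] at hdiv
  set q := (c + d) ^ n / d
  have hpow : (c + d) ^ (n + 1) = c ^ (n + 1) + d * ((c + d) * q + c ^ n) := by
    rw [pow_succ (c + d), ← hdiv]
    ring
  rw [hpow, Nat.add_mul_div_left _ _ hd]
  generalize c ^ (n + 1) / d = x
  omega

theorem pow_lt_of_pow_lt_of_le {c d m n : ℕ} (hd : 1 < d) (h : c ^ n < d) (hmn : m ≤ n) :
    c ^ m < d := by
  rcases Nat.eq_zero_or_pos c with rfl | hc
  · exact (pow_le_one₀ le_rfl zero_le_one).trans_lt hd
  · exact (Nat.pow_le_pow_right hc hmn).trans_lt h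

/-- Digits of the base-`b` expansion of `1/d`. -/
theorem stmt13 (b d : ℕ) (hd : 1 < d) (hdb : d ≤ b) (a : ℕ → ℕ)
    (ha : ∀ i, 1 ≤ i → a i = b ^ i / d - b * (b ^ (i - 1) / d)) :
    ∀ k : ℕ, 1 ≤ k →
      ((∀ i, 1 ≤ i → i ≤ k → a i = (b - d) ^ (i - 1)) ↔ (b - d) ^ k < d) ∧
      ((∀ i, 1 ≤ i → i ≤ k - 1 → a i = (b - d) ^ (i - 1)) →
        a k = (b - d) ^ (k - 1) + (b - d) ^ k / d) := by
  obtain ⟨c, rfl⟩ := Nat.exists_eq_add_of_le' hdb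
  simp only [Nat.add_sub_cancel]
  have digit (n : ℕ) (h : c ^ n < d) : a (n + 1) = c ^ n + c ^ (n + 1) / d := by
    rw [ha (n + 1) n.succ_pos, Nat.add_sub_cancel, digit_eq_of_pow_lt h]
  have pow_lt (n : ℕ) (h : ∀ i, 1 ≤ i → i ≤ n → a i = c ^ (i - 1)) : c ^ n < d := by
    induction n with
    | zero => simpa using hd
    | succ n ih =>
      have hn := digit n (ih fun i hi hin => h i hi (hin.trans n.le_succ))
      rw [h (n + 1) n.succ_pos le_rfl, Nat.add_sub_cancel] at hn
      exact (Nat.div_eq_zero_iff_lt (by omega)).mp (by omega)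
  intro k hk
  refine ⟨⟨pow_lt k, fun h i hi hik => ?_⟩, fun h => ?_⟩
  · obtain ⟨n, rfl⟩ := Nat.exists_eq_add_of_le' hi
    rw [digit n (pow_lt_of_pow_lt_of_le hd h (by omega)),
      Nat.div_eq_of_lt (pow_lt_of_pow_lt_of_le hd h hik), Nat.add_sub_cancel, add_zero]
  · obtain ⟨n, rfl⟩ := Nat.exists_eq_add_of_le' hk
    exact digit n (pow_lt n h)
end

section
/- Let b and d be integers with 1 < d ≤ b, and for i ≥ 1 set a_i := ⌊b^i/d⌋ − b·⌊b^{i−1}/d⌋ (the digits of the base-b expansion of 1/d). Then exactly one of the following five cases occurs: (1) a_1 ≥ 2, which holds if and only if d ≤ b/2; (2) a_1 = 1 and a_2 ≥ 3, which holds if and only if b/2 < d ≤ b²/(b+3); (3) a_1 = 1, a_2 = 2, and a_3 ≥ 4, which holds if and only if b > 6 and d = b − 2; (4) a_i = 1 for all i ≥ 1, which holds if and only if d = b − 1; (5) a_1 = 1 and a_i = 0 for all i ≥ 2, which holds if and only if d = b. -/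
/-- If the predicate `B` implies `A`, holds somewhere, and `A` holds at most once, then `A` and `B`
agree and `A` holds exactly once. -/
theorem iff_and_existsUnique {ι : Type*} {A B : ι → Prop} (hBA : ∀ i, B i → A i)
    (hB : ∃ i, B i) (hA : ∀ i j, A i → A j → i = j) : (∀ i, A i ↔ B i) ∧ ∃! i, A i := by
  obtain ⟨k, hk⟩ := hB
  exact ⟨fun i ↦ ⟨fun hi ↦ hA k i (hBA k hk) hi ▸ hk, hBA i⟩,
    k, hBA k hk, fun i hi ↦ hA i k hi (hBA k hk)⟩

/-- The next base-`b` digit of `1/d` is obtained by dividing `b` times the current remainder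
by `d`. -/
theorem pow_succ_div_sub_mul_pow_div (b d n : ℕ) (hd : 0 < d) :
    b ^ (n + 1) / d - b * (b ^ n / d) = b * (b ^ n % d) / d := by
  have h : b ^ (n + 1) = b * (b ^ n % d) + d * (b * (b ^ n / d)) := by
    conv_lhs => rw [pow_succ', ← Nat.mod_add_div (b ^ n) d]
    ring
  rw [h, Nat.add_mul_div_left _ _ hd, Nat.add_sub_cancel]

/-- The five ranges of `d` cover all `d ≤ b`. -/
theorem five_cases_exhaustive (b d : ℕ) (hdb : d ≤ b) :
    2 * d ≤ b ∨ (b < 2 * d ∧ d * (b + 3) ≤ b ^ 2) ∨ (6 < b ∧ d = b - 2) ∨ d = b - 1 ∨ d = b := by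
  by_cases h₁ : 2 * d ≤ b
  · exact .inl h₁
  by_cases h₂ : d * (b + 3) ≤ b ^ 2
  · exact .inr (.inl ⟨by omega, h₂⟩)
  obtain ⟨k, rfl⟩ := Nat.exists_eq_add_of_le hdb
  have hk : k < 3 := by
    by_contra! hk
    exact h₂ (by nlinarith)
  interval_cases k
  · simp
  · simp
  · have : 4 < d := by
      by_contra! hd
      exact h₂ (by nlinarith)
    omega

/-- Five-case structure of the base-`b` expansion of `1/d`, with all case
characterizations, and the fact that exactly one case occurs. -/
theorem stmt14 (b d : ℕ) (hd : 1 < d) (hdb : d ≤ b) (a : ℕ → ℕ)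
    (ha : ∀ i, 1 ≤ i → a i = b ^ i / d - b * (b ^ (i - 1) / d)) :
    ((2 ≤ a 1) ↔ 2 * d ≤ b) ∧
    ((a 1 = 1 ∧ 3 ≤ a 2) ↔ (b < 2 * d ∧ d * (b + 3) ≤ b ^ 2)) ∧
    ((a 1 = 1 ∧ a 2 = 2 ∧ 4 ≤ a 3) ↔ (6 < b ∧ d = b - 2)) ∧
    ((∀ i, 1 ≤ i → a i = 1) ↔ d = b - 1) ∧
    ((a 1 = 1 ∧ ∀ i, 2 ≤ i → a i = 0) ↔ d = b) ∧
    (∃! c : Fin 5,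
      [2 ≤ a 1,
       a 1 = 1 ∧ 3 ≤ a 2,
       a 1 = 1 ∧ a 2 = 2 ∧ 4 ≤ a 3,
       ∀ i, 1 ≤ i → a i = 1,
       a 1 = 1 ∧ ∀ i, 2 ≤ i → a i = 0].get c) := by
  have hd0 : 0 < d := by omega
  have ha' (n : ℕ) : a (n + 1) = b * (b ^ n % d) / d := by
    rw [ha _ (by omega), Nat.add_sub_cancel, pow_succ_div_sub_mul_pow_div b d n hd0]
  have a_one : a 1 = b / d := by simpa [Nat.mod_eq_of_lt hd] using ha' 0
  have a_one_eq (h : b < 2 * d) : a 1 = 1 := by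
    rw [a_one]
    exact Nat.div_eq_of_lt_le (by omega) (by omega)
  have h₁ : 2 * d ≤ b → 2 ≤ a 1 := fun h ↦ by
    rwa [a_one, Nat.le_div_iff_mul_le hd0]
  have h₂ : b < 2 * d ∧ d * (b + 3) ≤ b ^ 2 → a 1 = 1 ∧ 3 ≤ a 2 := fun ⟨h, h'⟩ ↦ by
    refine ⟨a_one_eq h, ?_⟩
    obtain ⟨r, rfl⟩ := Nat.exists_eq_add_of_le hdb
    have hr : (d + r) % d = r := by
      rw [Nat.add_mod_left, Nat.mod_eq_of_lt (by omega)]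
    rw [ha' 1, pow_one, hr, Nat.le_div_iff_mul_le hd0]
    nlinarith
  have h₃ : 6 < b ∧ d = b - 2 → a 1 = 1 ∧ a 2 = 2 ∧ 4 ≤ a 3 := fun ⟨h, h'⟩ ↦ by
    refine ⟨a_one_eq (by omega), ?_, ?_⟩
    all_goals
      obtain rfl : b = d + 2 := by omega
      rw [ha', Nat.pow_mod, Nat.add_mod_left, Nat.mod_eq_of_lt (by omega : 2 < d),
        Nat.mod_eq_of_lt (by omega)]
    · exact Nat.div_eq_of_lt_le (by omega) (by omega)
    · rw [Nat.le_div_iff_mul_le hd0]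
      omega
  have h₄ : d = b - 1 → ∀ i, 1 ≤ i → a i = 1 := fun h i hi ↦ by
    obtain ⟨n, rfl⟩ := Nat.exists_eq_add_of_le' hi
    have hb : b = d + 1 := by omega
    have hr : b ^ n % d = 1 := by
      rw [Nat.pow_mod, hb, Nat.add_mod_left, Nat.mod_eq_of_lt hd, one_pow, Nat.mod_eq_of_lt hd]
    rw [ha', hr, mul_one, ← a_one, a_one_eq (by omega)]
  have h₅ : d = b → a 1 = 1 ∧ ∀ i, 2 ≤ i → a i = 0 := fun h ↦ by
    refine ⟨a_one_eq (by omega), fun i hi ↦ ?_⟩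
    obtain ⟨n, rfl⟩ := Nat.exists_eq_add_of_le' hi
    rw [ha' (n + 1), h, pow_succ, Nat.mul_mod_left, mul_zero, Nat.zero_div]
  let A : Fin 5 → Prop := [2 ≤ a 1, a 1 = 1 ∧ 3 ≤ a 2, a 1 = 1 ∧ a 2 = 2 ∧ 4 ≤ a 3,
    ∀ i, 1 ≤ i → a i = 1, a 1 = 1 ∧ ∀ i, 2 ≤ i → a i = 0].get
  let B : Fin 5 → Prop := [2 * d ≤ b, b < 2 * d ∧ d * (b + 3) ≤ b ^ 2, 6 < b ∧ d = b - 2,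
    d = b - 1, d = b].get
  have hBA : ∀ c, B c → A c := by
    intro c
    fin_cases c
    exacts [h₁, h₂, h₃, h₄, h₅]
  have hB : ∃ c, B c := by
    rcases five_cases_exhaustive b d hdb with h | h | h | h | h
    exacts [⟨0, h⟩, ⟨1, h⟩, ⟨2, h⟩, ⟨3, h⟩, ⟨4, h⟩]
  let index : ℕ → ℕ → Fin 5 := fun x y ↦
    if 2 ≤ x then 0 else if 3 ≤ y then 1 else if y = 2 then 2 else if y = 1 then 3 else 4
  have hA : ∀ c, A c → c = index (a 1) (a 2) := by
    intro c
    fin_cases c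
    · intro (h : 2 ≤ a 1)
      simp [index, h]
    · rintro ⟨h, h'⟩
      simp [index, h, h']
    · rintro ⟨h, h', -⟩
      simp [index, h, h']
    · intro (h : ∀ i, 1 ≤ i → a i = 1)
      simp [index, h]
    · rintro ⟨h, h'⟩
      simp [index, h, h']
  obtain ⟨hiff, huniq⟩ := iff_and_existsUnique hBA hB
    fun i j hi hj ↦ (hA i hi).trans (hA j hj).symm
  exact ⟨hiff 0, hiff 1, hiff 2, hiff 3, hiff 4, huniq⟩
end

section
/- Let b, d, D be integers with 1 ≤ D < d ≤ b, and for i ≥ 1 set e_i := ⌊D·b^i/d⌋ − b·⌊D·b^{i−1}/d⌋ (the digits of the base-b expansion of D/d). Then for every k ≥ 0: e_i = D·(b−d)^{i−1} for all i = 1, …, k if and only if D·(b−d)^k < d. Moreover, if D·(b−d)^k < d, then e_{k+1} = D·(b−d)^k + ⌊D·(b−d)^{k+1}/d⌋. -/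
/-- If `D * (b - d) ^ k < d`, it is the remainder of `D * b ^ k` modulo `d`, and it determines
the digit of `D / d` at position `k + 1`. -/
lemma digit_eq_of_remainder_lt {b d D k : ℕ} (hdb : d ≤ b) (h : D * (b - d) ^ k < d) :
    D * b ^ (k + 1) / d - b * (D * b ^ k / d) =
      D * (b - d) ^ k + D * (b - d) ^ (k + 1) / d := by
  have hd : 0 < d := by omega
  obtain ⟨c, rfl⟩ := Nat.exists_eq_add_of_le hdb
  simp only [Nat.add_sub_cancel_left] at h ⊢
  have hmod : D * (d + c) ^ k % d = D * c ^ k := by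
    have hc : d + c ≡ c [MOD d] := by simp [Nat.ModEq]
    exact Eq.trans ((hc.pow k).mul_left D) (Nat.mod_eq_of_lt h)
  have hdiv := Nat.div_add_mod (D * (d + c) ^ k) d
  rw [hmod] at hdiv
  generalize D * (d + c) ^ k / d = q at hdiv ⊢
  have hsplit : D * (d + c) ^ (k + 1) =
      D * c ^ (k + 1) + d * ((d + c) * q + D * c ^ k) := by
    rw [pow_succ, ← mul_assoc, ← hdiv]
    ring
  rw [hsplit, Nat.add_mul_div_left _ _ hd, add_left_comm, Nat.add_sub_cancel_left, add_comm]

lemma mul_pow_lt_of_mul_pow_succ_lt {c d D k : ℕ} (hDd : D < d)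
    (h : D * c ^ (k + 1) < d) : D * c ^ k < d := by
  rcases Nat.eq_zero_or_pos c with rfl | hc
  · cases k <;> simp <;> omega
  · exact (Nat.mul_le_mul_left D (Nat.pow_le_pow_right hc k.le_succ)).trans_lt h

/-- Digits of the base-`b` expansion of `D/d`. -/
theorem stmt15 (b d D : ℕ) (hD1 : 1 ≤ D) (hDd : D < d) (hdb : d ≤ b) (e : ℕ → ℕ)
    (he : ∀ i, 1 ≤ i → e i = D * b ^ i / d - b * (D * b ^ (i - 1) / d)) :
    ∀ k : ℕ,
      ((∀ i, 1 ≤ i → i ≤ k → e i = D * (b - d) ^ (i - 1)) ↔ D * (b - d) ^ k < d) ∧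
      (D * (b - d) ^ k < d →
        e (k + 1) = D * (b - d) ^ k + D * (b - d) ^ (k + 1) / d) := by
  have digit : ∀ k, D * (b - d) ^ k < d →
      e (k + 1) = D * (b - d) ^ k + D * (b - d) ^ (k + 1) / d := fun k h => by
    rw [he (k + 1) (by omega), Nat.add_sub_cancel]
    exact digit_eq_of_remainder_lt hdb h
  refine fun k => ⟨?_, digit k⟩
  induction k with
  | zero => exact ⟨fun _ => by simpa using hDd, fun _ i h1 h0 => by omega⟩
  | succ k ih =>
    constructor
    · intro h
      have hk := digit k (ih.1 fun i h1 hik => h i h1 (by omega))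
      rw [h (k + 1) (by omega) le_rfl, Nat.add_sub_cancel] at hk
      exact (Nat.div_eq_zero_iff_lt (by omega)).1 (by omega)
    · intro h i h1 hik
      have hk := mul_pow_lt_of_mul_pow_succ_lt hDd h
      rcases Nat.lt_or_ge k i with hlt | hle
      · obtain rfl : i = k + 1 := by omega
        rw [digit k hk, Nat.div_eq_of_lt h, Nat.add_sub_cancel, add_zero]
      · exact ih.2 hk i h1 hle
end

section
/- Let b, d, D be integers with 1 ≤ D < d ≤ b. For i ≥ 1 set a_i := ⌊b^i/d⌋ − b·⌊b^{i−1}/d⌋ and e_i := ⌊D·b^i/d⌋ − b·⌊D·b^{i−1}/d⌋, and define the carry digits r_k recursively by r_1 := 0 and r_{k+1} := e_k − D·a_k + b·r_k for k ≥ 1. Then for every k ≥ 1, r_k = ⌊D·b^{k−1}/d⌋ − D·⌊b^{k−1}/d⌋ = ⌊D·(b−d)^{k−1}/d⌋ − D·⌊(b−d)^{k−1}/d⌋. -/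
/-- Multiplying by `D` before or after dividing by `d` differs by `D * (x % d) / d`. -/
theorem mul_div_sub_mul_div_eq (d D x : ℕ) (hd : 0 < d) :
    ((D * x / d : ℕ) : ℤ) - (D : ℤ) * ((x / d : ℕ) : ℤ) = ((D * (x % d) / d : ℕ) : ℤ) := by
  have h : D * x / d = D * (x % d) / d + D * (x / d) := by
    rw [← Nat.add_mul_div_left _ _ hd]
    congr 1
    conv_lhs => rw [← Nat.mod_add_div x d]
    ring
  rw [h]
  push_cast
  ring

/-- The truncated difference `c * b ^ (n + 1) / d - b * (c * b ^ n / d)` is a true difference. -/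
theorem mul_div_pow_le_div_pow_succ (b c d n : ℕ) :
    b * (c * b ^ n / d) ≤ c * b ^ (n + 1) / d :=
  (Nat.mul_div_le_mul_div_assoc _ _ _).trans_eq (by ring_nf)

theorem sub_self_pow_mod (b d n : ℕ) (hdb : d ≤ b) : (b - d) ^ n % d = b ^ n % d := by
  rw [Nat.pow_mod, ← Nat.mod_eq_sub_mod hdb, ← Nat.pow_mod]

/-- Closed formula for the carry digits of the `D`-fold sum `1/d + ⋯ + 1/d = D/d`
in base `b`. -/
theorem stmt16 (b d D : ℕ) (hD1 : 1 ≤ D) (hDd : D < d) (hdb : d ≤ b)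
    (a e : ℕ → ℕ) (r : ℕ → ℤ)
    (ha : ∀ i, 1 ≤ i → a i = b ^ i / d - b * (b ^ (i - 1) / d))
    (he : ∀ i, 1 ≤ i → e i = D * b ^ i / d - b * (D * b ^ (i - 1) / d))
    (hr1 : r 1 = 0)
    (hrk : ∀ k, 1 ≤ k → r (k + 1) = (e k : ℤ) - (D : ℤ) * (a k : ℤ) + (b : ℤ) * r k) :
    ∀ k, 1 ≤ k →
      r k = ((D * b ^ (k - 1) / d : ℕ) : ℤ) - (D : ℤ) * ((b ^ (k - 1) / d : ℕ) : ℤ) ∧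
      r k = ((D * (b - d) ^ (k - 1) / d : ℕ) : ℤ) -
        (D : ℤ) * (((b - d) ^ (k - 1) / d : ℕ) : ℤ) := by
  have hd : 0 < d := by omega
  have key : ∀ n, r (n + 1) =
      ((D * b ^ n / d : ℕ) : ℤ) - (D : ℤ) * ((b ^ n / d : ℕ) : ℤ) := by
    intro n
    induction n with
    | zero =>
      simp [hr1, Nat.div_eq_of_lt hDd, Nat.div_eq_of_lt (show 1 < d by omega)]
    | succ n ih =>
      have h_one := mul_div_pow_le_div_pow_succ b 1 d n
      simp only [one_mul] at h_one
      rw [hrk (n + 1) (by omega), ih, ha (n + 1) (by omega), he (n + 1) (by omega),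
        Nat.add_sub_cancel, Nat.cast_sub h_one,
        Nat.cast_sub (mul_div_pow_le_div_pow_succ b D d n)]
      push_cast
      ring
  intro k hk
  obtain ⟨n, rfl⟩ := Nat.exists_eq_add_of_le' hk
  rw [Nat.add_sub_cancel]
  refine ⟨key n, ?_⟩
  rw [key n, mul_div_sub_mul_div_eq d D _ hd, mul_div_sub_mul_div_eq d D _ hd,
    sub_self_pow_mod b d n hdb]
end

section
/- Let b, d, D be integers with 1 ≤ D ≤ d ≤ b − 2, β := b − D, and b > 6. Then c_{b,β}(1/d) ≥ (β + 1)/(β·(β − 1)). -/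
/-- The fractional digits of `x` are differences of consecutive shifted fractional parts. -/
lemma bDigit_neg_succ (b : ℕ) (hb : 0 < b) (x : ℝ) (k : ℕ) :
    (bDigit b x (-((k : ℤ) + 1)) : ℝ) =
      b * Int.fract (x * (b : ℝ) ^ k) - Int.fract (x * (b : ℝ) ^ (k + 1)) := by
  have hb0 : (b : ℝ) ≠ 0 := by positivity
  have hpow : x * (b : ℝ) ^ (-(-((k : ℤ) + 1))) = x * (b : ℝ) ^ (k + 1) := by
    rw [neg_neg]; norm_cast
  have hdiv : ⌊x * (b : ℝ) ^ (k + 1)⌋ / (b : ℤ) = ⌊x * (b : ℝ) ^ k⌋ := by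
    rw [← Int.floor_div_natCast]
    congr 1
    rw [div_eq_iff hb0, pow_succ, mul_assoc]
  have hmod := Int.emod_add_mul_ediv ⌊x * (b : ℝ) ^ (k + 1)⌋ (b : ℤ)
  rw [hdiv] at hmod
  have hmod' : ((⌊x * (b : ℝ) ^ (k + 1)⌋ % (b : ℤ) : ℤ) : ℝ) =
      (⌊x * (b : ℝ) ^ (k + 1)⌋ : ℝ) - b * (⌊x * (b : ℝ) ^ k⌋ : ℝ) := by
    rw [eq_sub_iff_add_eq]; exact_mod_cast hmod
  rw [bDigit, hpow, hmod', Int.fract, Int.fract]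
  ring

/-- A number in `[0, 1)` has no nonzero digits at nonnegative positions. -/
lemma bDigit_natCast_eq_zero (b : ℕ) (hb : 0 < b) (x : ℝ) (hx0 : 0 ≤ x) (hx1 : x < 1) (n : ℕ) :
    bDigit b x n = 0 := by
  have hb1 : (1 : ℝ) ≤ b := by exact_mod_cast hb
  have hle : x * (b : ℝ) ^ (-(n : ℤ)) ≤ x := by
    rw [zpow_neg, zpow_natCast]
    exact mul_le_of_le_one_right hx0 (inv_le_one_of_one_le₀ (one_le_pow₀ hb1))
  have hfloor : ⌊x * (b : ℝ) ^ (-(n : ℤ))⌋ = 0 := by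
    rw [Int.floor_eq_zero_iff]
    exact ⟨by positivity, hle.trans_lt hx1⟩
  rw [bDigit, hfloor, Int.zero_emod]

/-- The content of a number in `[0, 1)` as a sum over its fractional digits. -/
lemma content_eq_tsum_nat (b β : ℕ) (hb : 0 < b) (x : ℝ) (hx0 : 0 ≤ x) (hx1 : x < 1) :
    content b β x = ∑' k : ℕ,
      (b * Int.fract (x * (b : ℝ) ^ k) - Int.fract (x * (b : ℝ) ^ (k + 1))) *
        ((β : ℝ)⁻¹) ^ (k + 1) := by
  have hinj : Function.Injective (fun k : ℕ => -((k : ℤ) + 1)) := by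
    intro i j h
    simpa using h
  rw [content, ← hinj.tsum_eq]
  · refine tsum_congr fun k => ?_
    rw [bDigit_neg_succ b hb, zpow_neg, inv_pow]
    norm_cast
  · intro i hi
    by_contra hrange
    apply hi
    have hi0 : 0 ≤ i := by
      by_contra! hneg
      exact hrange ⟨(-i - 1).toNat, by simp only; omega⟩
    lift i to ℕ using hi0
    simp [bDigit_natCast_eq_zero b hb x hx0 hx1]

/-- The first three shifted fractional parts give a lower bound for the content. -/
lemma le_content (b β : ℕ) (hβ : 2 ≤ β) (hβb : β ≤ b) (x : ℝ) (hx0 : 0 ≤ x) (hx1 : x < 1) :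
    x + ((b : ℝ) - β) / β *
      (x + Int.fract (x * b) / β + Int.fract (x * (b : ℝ) ^ 2) / (β : ℝ) ^ 2) ≤
      content b β x := by
  have hβ0 : (0 : ℝ) < β := by positivity
  have hβb' : (β : ℝ) ≤ b := by exact_mod_cast hβb
  set u : ℕ → ℝ := fun k => Int.fract (x * (b : ℝ) ^ k) * ((β : ℝ)⁻¹) ^ k with hu
  have hu0 : ∀ k, 0 ≤ u k := fun k => mul_nonneg (Int.fract_nonneg _) (by positivity)
  have hsum : Summable u := by
    refine Summable.of_nonneg_of_le hu0 (fun k => ?_)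
      (summable_geometric_of_lt_one (r := (β : ℝ)⁻¹) (by positivity) ?_)
    · exact mul_le_of_le_one_left (by positivity) (Int.fract_lt_one _).le
    · exact inv_lt_one_of_one_lt₀ (by exact_mod_cast (by omega : 1 < β))
  have hsum' : Summable fun k => u (k + 1) := (summable_nat_add_iff 1).2 hsum
  have hzero : u 0 = x := by
    simp [hu, Int.fract_eq_self.2 ⟨hx0, hx1⟩]
  have hcontent : content b β x = x + ((b : ℝ) - β) / β * ∑' k, u k := by
    have hterm : ∀ k : ℕ,
        (b * Int.fract (x * (b : ℝ) ^ k) - Int.fract (x * (b : ℝ) ^ (k + 1))) *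
          ((β : ℝ)⁻¹) ^ (k + 1) = (b : ℝ) / β * u k - u (k + 1) := by
      intro k
      simp only [hu]
      ring
    rw [content_eq_tsum_nat b β (by omega) x hx0 hx1, tsum_congr hterm,
      (hsum.mul_left _).tsum_sub hsum', tsum_mul_left]
    have hshift := hsum.tsum_eq_zero_add
    rw [hzero] at hshift
    rw [sub_div, div_self hβ0.ne']
    linarith
  have hpartial := hsum.sum_le_tsum (Finset.range 3) (fun k _ => hu0 k)
  rw [hcontent]
  have hcoef : 0 ≤ ((b : ℝ) - β) / β := div_nonneg (by linarith) hβ0.le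
  refine add_le_add_right (mul_le_mul_of_nonneg_left (le_trans (le_of_eq ?_) hpartial) hcoef) x
  simp only [Finset.sum_range_succ, Finset.sum_range_zero, hzero]
  simp [hu, div_eq_mul_inv]

/-- `1` has a single nonzero digit, so its content is `1`. -/
lemma content_one (b β : ℕ) (hb : 2 ≤ b) : content b β 1 = 1 := by
  have hb1 : (1 : ℝ) < b := by exact_mod_cast hb
  have hb2 : (1 : ℤ) < b := by exact_mod_cast hb
  rw [content, tsum_eq_single 0]
  · simp [bDigit, Int.emod_eq_of_lt zero_le_one hb2]
  · intro i hi
    suffices bDigit b 1 i = 0 by simp [this]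
    rcases lt_or_gt_of_ne hi with h | h
    · obtain ⟨k, rfl⟩ : ∃ k : ℕ, i = -((k : ℤ) + 1) := ⟨(-i - 1).toNat, by omega⟩
      have hfract : ∀ n : ℕ, Int.fract ((1 : ℝ) * (b : ℝ) ^ n) = 0 := by
        intro n
        rw [one_mul]
        exact_mod_cast Int.fract_natCast (R := ℝ) (b ^ n)
      have hdigit := bDigit_neg_succ b (by omega) 1 k
      rw [hfract, hfract] at hdigit
      have : (bDigit b 1 (-((k : ℤ) + 1)) : ℝ) = 0 := by simpa using hdigit
      exact_mod_cast this
    · have hfloor : ⌊(1 : ℝ) * (b : ℝ) ^ (-i)⌋ = 0 := by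
        rw [Int.floor_eq_zero_iff]
        exact ⟨by positivity, by rw [one_mul]; exact zpow_lt_one_of_neg₀ hb1 (by omega)⟩
      rw [bDigit, hfloor, Int.zero_emod]

/-- Lower bound on the `(b, b−D)`-content of `1/d`. -/
theorem stmt17 (b d D : ℕ) (hD1 : 1 ≤ D) (hDd : D ≤ d) (hdb : d ≤ b - 2) (hb : 6 < b) :
    (((b - D : ℕ) : ℝ) + 1) / (((b - D : ℕ) : ℝ) * (((b - D : ℕ) : ℝ) - 1)) ≤
      content b (b - D) (1 / (d : ℝ)) := by
  obtain ⟨β, hβ⟩ : ∃ β, β = b - D := ⟨_, rfl⟩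
  rw [← hβ]
  have hβ2 : 2 ≤ β := by omega
  have hβb : β ≤ b := by omega
  have hβ2' : (2 : ℝ) ≤ β := by exact_mod_cast hβ2
  have hβb' : (β : ℝ) ≤ b := by exact_mod_cast hβb
  have hβpos : (0 : ℝ) < β := by linarith
  have hβpred : (0 : ℝ) < β - 1 := by linarith
  rcases Nat.lt_or_ge d 2 with hd | hd
  · obtain rfl : d = 1 := by omega
    have hβ6 : (6 : ℝ) ≤ β := by exact_mod_cast (by omega : 6 ≤ β)
    rw [Nat.cast_one, div_one, content_one b β (by omega), div_le_one (by positivity)]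
    nlinarith
  have hd2 : (2 : ℝ) ≤ d := by exact_mod_cast hd
  have hdpos : (0 : ℝ) < d := by linarith
  have hx1 : 1 / (d : ℝ) < 1 := by rw [div_lt_one hdpos]; linarith
  refine le_trans ?_ (le_content b β hβ2 hβb (1 / d) (by positivity) hx1)
  have hcoef : 0 ≤ ((b : ℝ) - β) / β := div_nonneg (by linarith) hβpos.le
  have hfract1 := Int.fract_nonneg (1 / (d : ℝ) * b)
  have hfract2 := Int.fract_nonneg (1 / (d : ℝ) * (b : ℝ) ^ 2)
  rcases Nat.lt_or_ge b (2 * d) with hlt | hge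
  · have hlt' : (b : ℝ) < 2 * d := by exact_mod_cast hlt
    have hdb' : (d : ℝ) + 2 ≤ b := by exact_mod_cast (by omega : d + 2 ≤ b)
    have hone : Int.fract (1 / (d : ℝ) * b) = ((b : ℝ) - d) / d := by
      rw [Int.fract_eq_iff]
      refine ⟨div_nonneg (by linarith) hdpos.le, by rw [div_lt_one hdpos]; linarith, 1, ?_⟩
      push_cast
      field_simp
      ring
    rcases Nat.lt_or_ge (d + 2) b with hgap | hgap
    · -- the remainder `b - d` is at least `3`
      have hr : (d : ℝ) + 3 ≤ b := by exact_mod_cast (by omega : d + 3 ≤ b)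
      have hβ3 : (3 : ℝ) ≤ β := by exact_mod_cast (by omega : 3 ≤ β)
      have hdrop : 1 / (d : ℝ) + ((b : ℝ) - β) / β * (1 / d + ((b : ℝ) - d) / d / β) ≤
          1 / (d : ℝ) + ((b : ℝ) - β) / β * (1 / d + Int.fract (1 / (d : ℝ) * b) / β +
            Int.fract (1 / (d : ℝ) * (b : ℝ) ^ 2) / (β : ℝ) ^ 2) := by
        rw [hone]
        exact add_le_add_right (mul_le_mul_of_nonneg_left
          (le_add_of_nonneg_right (by positivity)) hcoef) _
      refine le_trans ?_ hdrop
      have hval : 1 / (d : ℝ) + ((b : ℝ) - β) / β * (1 / d + ((b : ℝ) - d) / d / β) =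
          (b * β + (b - β) * (b - d)) / (d * β ^ 2) := by
        field_simp
        ring
      rw [hval, div_le_div_iff₀ (by positivity) (by positivity)]
      obtain ⟨r, hr'⟩ : ∃ r : ℝ, r = b - d := ⟨_, rfl⟩
      have hd' : (d : ℝ) = b - r := by linarith
      rw [hd'] at hr ⊢
      have hb0 : (0 : ℝ) ≤ b := by positivity
      have key : 0 ≤ (r - 2) * b * β + 2 * r * β - r * b := by
        have h1 : 0 ≤ (r - 2) * b * (β - 3) :=
          mul_nonneg (mul_nonneg (by linarith) hb0) (by linarith)
        have h2 : 0 ≤ (r - 3) * b := mul_nonneg (by linarith) hb0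
        have h3 : 0 ≤ r * β := mul_nonneg (by linarith) hβpos.le
        nlinarith
      nlinarith [mul_nonneg hβpos.le key]
    · -- the remainder is exactly `2`, and the next one is `4`
      have hd' : (d : ℝ) = b - 2 := by
        have : (b : ℝ) = d + 2 := by exact_mod_cast (by omega : b = d + 2)
        linarith
      have hb7 : (7 : ℝ) ≤ b := by exact_mod_cast hb
      have hbne : (b : ℝ) - 2 ≠ 0 := by linarith
      have hbpos : (0 : ℝ) < b - 2 := by linarith
      have htwo : Int.fract (1 / (d : ℝ) * (b : ℝ) ^ 2) = 4 / (d : ℝ) := by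
        rw [Int.fract_eq_iff]
        refine ⟨by positivity, by rw [div_lt_one hdpos]; linarith, b + 2, ?_⟩
        push_cast
        rw [hd']
        field_simp
        ring
      rw [hone, htwo, hd']
      have hval : 1 / ((b : ℝ) - 2) + ((b : ℝ) - β) / β * (1 / (b - 2) +
            ((b : ℝ) - (b - 2)) / (b - 2) / β + 4 / (b - 2) / (β : ℝ) ^ 2) =
          (b * β ^ 2 + (b - β) * (2 * β + 4)) / ((b - 2) * β ^ 3) := by
        field_simp
        ring
      rw [hval, div_le_div_iff₀ (by positivity) (by positivity)]
      have key : 0 ≤ (b * β ^ 2 + (b - β) * (2 * β + 4)) * ((β : ℝ) - 1)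
          - (β + 1) * (b - 2) * β ^ 2 := by
        have h1 : 0 ≤ ((b : ℝ) - β) * (β - 2) := mul_nonneg (by linarith) (by linarith)
        nlinarith [sq_nonneg (β : ℝ)]
      nlinarith [mul_nonneg hβpos.le key]
  · have hge' : 2 * (d : ℝ) ≤ b := by exact_mod_cast hge
    have hβ3 : (3 : ℝ) ≤ β := by exact_mod_cast (by omega : 3 ≤ β)
    have hdrop : 1 / (d : ℝ) + ((b : ℝ) - β) / β * (1 / d) ≤
        1 / (d : ℝ) + ((b : ℝ) - β) / β * (1 / d + Int.fract (1 / (d : ℝ) * b) / β +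
          Int.fract (1 / (d : ℝ) * (b : ℝ) ^ 2) / (β : ℝ) ^ 2) := by
      gcongr
      rw [add_assoc]
      exact le_add_of_nonneg_right (by positivity)
    refine le_trans ?_ hdrop
    have hval : 1 / (d : ℝ) + ((b : ℝ) - β) / β * (1 / d) = b / (d * β) := by
      field_simp
      ring
    rw [hval, div_le_div_iff₀ (by positivity) (by positivity)]
    have key : 0 ≤ (b : ℝ) * (β - 1) - (β + 1) * d := by
      nlinarith [mul_nonneg (sub_nonneg.2 hge') hβpred.le, mul_nonneg hdpos.le (sub_nonneg.2 hβ3)]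
    nlinarith [mul_nonneg hβpos.le key]
end

section
/- Let b, d, D be integers with 1 ≤ D < d ≤ b − 2 and β := b − D, and suppose that at least one of the following holds: (1) d ≤ b/2, or (2) D < d·(1 − 1/(b−d)). Then c_{b,β}(D/d) ≥ D·(β + 1)/(β·(β − 1)). -/
open Filter Topology

/-- A fractional digit of `D / d` is a quotient of long division. -/
lemma bDigit_div_neg_succ {b d : ℕ} (D k : ℕ) (hd : 0 < d) :
    bDigit b ((D : ℝ) / d) (-((k : ℤ) + 1)) = ((b * (b ^ k * D % d) / d : ℕ) : ℤ) := by
  have hfloor : ⌊(D : ℝ) / d * (b : ℝ) ^ (k + 1)⌋ = ((b ^ (k + 1) * D / d : ℕ) : ℤ) := by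
    have h := Nat.floor_div_eq_div (K := ℝ) (b ^ (k + 1) * D) d
    rw [← h, Int.natCast_floor_eq_floor (by positivity)]
    congr 1
    push_cast
    ring
  have hlong : b ^ (k + 1) * D / d % b = b * (b ^ k * D % d) / d := by
    rcases Nat.eq_zero_or_pos b with rfl | hb
    · simp
    have hsplit : b ^ (k + 1) * D = b * (b ^ k * D % d) + d * (b * (b ^ k * D / d)) := by
      have h := Nat.mod_add_div (b ^ k * D) d
      calc b ^ (k + 1) * D = b * (b ^ k * D) := by ring
        _ = b * (b ^ k * D % d + d * (b ^ k * D / d)) := by rw [h]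
        _ = _ := by ring
    rw [hsplit, Nat.add_mul_div_left _ _ hd, Nat.add_mul_mod_self_left, Nat.mod_eq_of_lt]
    exact Nat.div_lt_of_lt_mul (by
      rw [mul_comm d b]; exact Nat.mul_lt_mul_of_pos_left (Nat.mod_lt _ hd) hb)
  have hexp : (b : ℝ) ^ (-(-((k : ℤ) + 1))) = (b : ℝ) ^ (k + 1) := by
    rw [neg_neg]; exact_mod_cast zpow_natCast (b : ℝ) (k + 1)
  rw [bDigit, hexp, hfloor, ← hlong]
  push_cast
  rfl

/-- The integral digits of a proper fraction vanish. -/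
lemma bDigit_eq_zero_of_nonneg {b : ℕ} {x : ℝ} (hb : 1 ≤ b) (hx0 : 0 ≤ x) (hx1 : x < 1)
    {i : ℤ} (hi : 0 ≤ i) : bDigit b x i = 0 := by
  have hb' : (1 : ℝ) ≤ b := by exact_mod_cast hb
  have hfloor : ⌊x * (b : ℝ) ^ (-i)⌋ = 0 := by
    rw [Int.floor_eq_zero_iff]
    have hle : (b : ℝ) ^ (-i) ≤ 1 := zpow_le_one_of_nonpos₀ hb' (by omega)
    have h0 : 0 ≤ (b : ℝ) ^ (-i) := by positivity
    exact ⟨by positivity, by nlinarith⟩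
  rw [bDigit, hfloor, Int.zero_emod]

/-- The content of a proper fraction as a power series in `1 / β`. -/
lemma content_div_eq_tsum {b d D : ℕ} (β : ℕ) (hb : 1 ≤ b) (hDd : D < d) :
    content b β ((D : ℝ) / d) =
      ∑' k : ℕ, ((b * (b ^ k * D % d) / d : ℕ) : ℝ) / (β : ℝ) ^ (k + 1) := by
  have hd : (0 : ℝ) < d := by exact_mod_cast (by omega : 0 < d)
  have hinj : Function.Injective (fun k : ℕ => -((k : ℤ) + 1)) := by
    intro k l h
    simp only at h
    omega
  rw [content, ← hinj.tsum_eq]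
  · refine tsum_congr fun k => ?_
    rw [bDigit_div_neg_succ D k (by omega), div_eq_mul_inv, zpow_neg]
    congr 2
  · intro i hi
    by_contra hrange
    have hi0 : 0 ≤ i := by
      by_contra hneg
      exact hrange ⟨(-i - 1).toNat, by simp only; omega⟩
    have hx1 : (D : ℝ) / d < 1 := (div_lt_one hd).2 (by exact_mod_cast hDd)
    exact hi (by simp [bDigit_eq_zero_of_nonneg hb (by positivity) hx1 hi0])

/-- Summation by parts with the first two remainders of the long division of `D` by `d`. -/
lemma le_content_div {b d D β : ℕ} (hβ : 2 ≤ β) (hb : b = β + D) (hDd : D < d) :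
    ((D : ℝ) + D * (D / β + ((b * D % d : ℕ) : ℝ) / (β : ℝ) ^ 2)) / d ≤
      content b β ((D : ℝ) / d) := by
  have hd : (0 : ℝ) < d := by exact_mod_cast (by omega : 0 < d)
  have hβ' : (2 : ℝ) ≤ β := by exact_mod_cast hβ
  have hβ0 : (0 : ℝ) < β := by linarith
  rw [content_div_eq_tsum β (by omega) hDd]
  set r : ℕ → ℕ := fun k => b ^ k * D % d with hr
  have hr0 : r 0 = D := by simp [hr, Nat.mod_eq_of_lt hDd]
  have hr1 : r 1 = b * D % d := by simp [hr]
  have hrd (k : ℕ) : r k < d := Nat.mod_lt _ (by omega)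
  have hstep (k : ℕ) : r (k + 1) + d * (b * r k / d) = b * r k := by
    have h : r (k + 1) = b * r k % d := by
      simp only [hr]
      rw [Nat.mul_mod_mod]
      congr 1
      ring
    rw [h, Nat.mod_add_div]
  set f : ℕ → ℝ := fun k => ((b * r k / d : ℕ) : ℝ) / (β : ℝ) ^ (k + 1) with hf
  change _ ≤ ∑' k, f k
  have hf0 (k : ℕ) : 0 ≤ f k := by simp only [hf]; positivity
  have hsum : Summable f := by
    have hgeom : Summable fun k : ℕ => (b : ℝ) * (1 / (β : ℝ)) ^ (k + 1) :=
      ((summable_nat_add_iff 1).2 (summable_geometric_of_lt_one (by positivity)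
        ((div_lt_one hβ0).2 (by linarith)))).mul_left _
    refine hgeom.of_nonneg_of_le hf0 fun k => ?_
    have hle : ((b * r k / d : ℕ) : ℝ) ≤ b := by
      exact_mod_cast Nat.div_le_of_le_mul (by
        rw [mul_comm d b]; exact Nat.mul_le_mul_left _ (hrd k).le)
    rw [one_div, inv_pow, ← div_eq_mul_inv]
    simp only [hf]
    gcongr
  have hterm (k : ℕ) : f k = ((r k : ℝ) / (β : ℝ) ^ k - (r (k + 1) : ℝ) / (β : ℝ) ^ (k + 1)
      + D * ((r k : ℝ) / (β : ℝ) ^ (k + 1))) / d := by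
    have h : (r (k + 1) : ℝ) + d * ((b * r k / d : ℕ) : ℝ) = (β + D) * r k := by
      have := hstep k
      rw [hb] at this ⊢
      exact_mod_cast this
    simp only [hf]
    field_simp
    rw [pow_succ]
    linear_combination (β : ℝ) ^ k * h
  have hpartial (n : ℕ) : ∑ k ∈ Finset.range n, f k = ((D : ℝ) - (r n : ℝ) / (β : ℝ) ^ n
      + D * ∑ k ∈ Finset.range n, (r k : ℝ) / (β : ℝ) ^ (k + 1)) / d := by
    rw [Finset.sum_congr rfl fun k _ => hterm k, ← Finset.sum_div, Finset.sum_add_distrib,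
      Finset.sum_range_sub', Finset.mul_sum, hr0]
    simp
  have htail : Tendsto (fun n : ℕ => (r n : ℝ) / (β : ℝ) ^ n) atTop (𝓝 0) := by
    have hgeom : Tendsto (fun n : ℕ => (d : ℝ) * (1 / (β : ℝ)) ^ n) atTop (𝓝 0) := by
      simpa using (tendsto_pow_atTop_nhds_zero_of_lt_one (r := 1 / (β : ℝ)) (by positivity)
        ((div_lt_one hβ0).2 (by linarith))).const_mul (d : ℝ)
    refine squeeze_zero (fun n => by positivity) (fun n => ?_) hgeom
    rw [one_div, inv_pow, ← div_eq_mul_inv]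
    gcongr
    exact_mod_cast (hrd n).le
  have hlim : Tendsto (fun n : ℕ => ((D : ℝ) - (r n : ℝ) / (β : ℝ) ^ n
      + D * (D / β + ((b * D % d : ℕ) : ℝ) / (β : ℝ) ^ 2)) / d) atTop
      (𝓝 (((D : ℝ) - 0 + D * (D / β + ((b * D % d : ℕ) : ℝ) / (β : ℝ) ^ 2)) / d)) :=
    ((htail.const_sub _).add_const _).div_const _
  rw [sub_zero] at hlim
  refine le_of_tendsto hlim ?_
  filter_upwards [eventually_ge_atTop 2] with n hn
  refine le_trans ?_ (hsum.sum_le_tsum (Finset.range n) fun k _ => hf0 k)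
  rw [hpartial n]
  have htwo : (D : ℝ) / β + ((b * D % d : ℕ) : ℝ) / (β : ℝ) ^ 2 ≤
      ∑ k ∈ Finset.range n, (r k : ℝ) / (β : ℝ) ^ (k + 1) := by
    calc (D : ℝ) / β + ((b * D % d : ℕ) : ℝ) / (β : ℝ) ^ 2
        = ∑ k ∈ Finset.range 2, (r k : ℝ) / (β : ℝ) ^ (k + 1) := by
          rw [Finset.sum_range_succ, Finset.sum_range_one, hr0, hr1]
          norm_num
      _ ≤ _ := Finset.sum_le_sum_of_subset_of_nonneg
          (Finset.range_subset_range.2 hn) fun k _ _ => by positivity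
  gcongr

/-- If `d < e * f`, the remainder of `(d + e) * (d - f)` modulo `d` compensates for the gap
between `e * f` and `2 * d`. -/
lemma two_mul_le_mul_add_mod {d e f D : ℕ} (hd : d = D + f) (h : d < e * f) :
    2 * d ≤ e * f + (d + e) * D % d := by
  have hdvd : d ∣ e * f + (d + e) * D % d := by
    rw [Nat.dvd_iff_mod_eq_zero, Nat.add_mod_mod]
    have : e * f + (d + e) * D = d * (D + e) := by rw [hd]; ring
    rw [this, Nat.mul_mod_right]
  obtain ⟨k, hk⟩ := hdvd
  have hk2 : 2 ≤ k := by
    by_contra hlt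
    have : k ≤ 1 := by omega
    have := Nat.mul_le_mul_left d this
    omega
  rw [hk, mul_comm 2 d]
  exact Nat.mul_le_mul_left d hk2

/-- Lower bound on the `(b, b−D)`-content of `D/d`. -/
theorem stmt18 (b d D : ℕ) (hD1 : 1 ≤ D) (hDd : D < d) (hdb : d ≤ b - 2)
    (hcase : 2 * d ≤ b ∨ (D : ℝ) < (d : ℝ) * (1 - 1 / ((b : ℝ) - (d : ℝ)))) :
    (D : ℝ) * (((b - D : ℕ) : ℝ) + 1) /
        (((b - D : ℕ) : ℝ) * (((b - D : ℕ) : ℝ) - 1)) ≤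
      content b (b - D) ((D : ℝ) / (d : ℝ)) := by
  obtain ⟨f, rfl⟩ := Nat.exists_eq_add_of_lt hDd
  obtain ⟨e, rfl⟩ := Nat.exists_eq_add_of_le (show D + f + 1 ≤ b by omega)
  have he : 2 ≤ e := by omega
  set d := D + f + 1 with hd
  obtain ⟨β, hβ⟩ : ∃ β, β = d + e - D := ⟨_, rfl⟩
  rw [← hβ]
  have hβe : β = e + (f + 1) := by omega
  refine le_trans ?_ (le_content_div (by omega) (by omega) hDd)
  set r := (d + e) * D % d with hr
  have hrd : r < d := Nat.mod_lt _ (by omega)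
  have he' : (2 : ℝ) ≤ e := by exact_mod_cast he
  have hβ3 : (3 : ℝ) ≤ β := by exact_mod_cast (by omega : 3 ≤ β)
  have hβR : (β : ℝ) = e + (f + 1) := by exact_mod_cast hβe
  have hdR : (d : ℝ) = D + f + 1 := by exact_mod_cast hd
  have hD0 : (1 : ℝ) ≤ D := by exact_mod_cast hD1
  have hf0 : (0 : ℝ) ≤ f := by positivity
  have hr0 : (0 : ℝ) ≤ r := by positivity
  have hkey : 2 * (d : ℝ) * β ≤ (e * β + r) * (β - 1) := by
    rcases hcase with h | h
    · have hde : (d : ℝ) ≤ e := by exact_mod_cast (by omega : d ≤ e)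
      have h1 : (d : ℝ) * β ≤ e * β := by gcongr
      calc 2 * (d : ℝ) * β ≤ (e * β + r) * 2 := by linarith
        _ ≤ (e * β + r) * (β - 1) := by gcongr; linarith
    · have hlt : d < e * (f + 1) := by
        have hcast : ((d + e : ℕ) : ℝ) - d = e := by push_cast; ring
        rw [hcast] at h
        have hmul : (D : ℝ) * e < d * (e - 1) := by
          calc (D : ℝ) * e < d * (1 - 1 / e) * e := by gcongr
            _ = d * (e - 1) := by field_simp
        have : (d : ℝ) < e * (f + 1) := by rw [hdR] at hmul ⊢; linarith
        exact_mod_cast this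
      have h2 : 2 * (d : ℝ) ≤ e * (f + 1) + r := by
        exact_mod_cast two_mul_le_mul_add_mod (D := D) (by omega) hlt
      have hre : (r : ℝ) ≤ e * β := by
        have : (r : ℝ) ≤ e * (f + 1) := by exact_mod_cast (hrd.trans hlt).le
        rw [hβR]
        nlinarith
      have h3 : 2 * (d : ℝ) * β ≤ (e * (f + 1) + r) * β := by gcongr
      have h4 : (e : ℝ) * β * 1 ≤ e * β * (e - 1) := by gcongr; linarith
      have h5 : (e * β + r) * (β - 1) - (e * (f + 1) + r) * β = (e : ℝ) * β * (e - 1) - r := by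
        rw [hβR]; ring
      linarith
  have hd0 : (0 : ℝ) < d := by rw [hdR]; positivity
  have hβD : (β : ℝ) + D = d + e := by rw [hβR, hdR]; ring
  have hval : ((D : ℝ) + D * (D / β + (r : ℝ) / (β : ℝ) ^ 2)) / d =
      D * ((d + e) * β + r) / (β ^ 2 * d) := by
    rw [← hβD]
    field_simp
    ring
  rw [hval, div_le_div_iff₀ (by nlinarith) (by positivity)]
  have h6 : (d : ℝ) * (β + 1) * β ≤ ((d + e) * β + r) * (β - 1) := by linarith
  have h7 := mul_le_mul_of_nonneg_left h6 (show (0 : ℝ) ≤ D * β by positivity)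
  linarith
end
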